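/- Continuous gradient method. Let H be a real Hilbert space, u₀ ∈ H, R > 0, B := {u ∈ H : ‖u − u₀‖ ≤ R}, and let F : H → H be twice Fréchet differentiable with ‖F″(u)‖ ≤ M₂ for all u ∈ B. Assume ‖F′(u)‖ ≤ M₁ for all u ∈ B, F′(u) is boundedly invertible with ‖[F′(u)]^{−1}‖ ≤ m₁ for all u ∈ B, and M₁·m₁²·‖F(u₀)‖ ≤ R. Then the Cauchy problem u̇(t) = −[F′(u(t))]*F(u(t)), u(0) = u₀ (where A* denotes the Hilbert adjoint) has a global solution u with u(t) ∈ B for all t ≥ 0; the strong limit y := lim_{t→∞} u(t) exists; F(y) = 0; and for all t ≥ 0: ‖F(u(t))‖ ≤ ‖F(u₀)‖·e^{−t/m₁²} and ‖u(t) − y‖ ≤ M₁·m₁²·‖F(u₀)‖·e^{−t/m₁²}. -/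

import Mathlib

open MeasureTheory Filter
open scoped RealInnerProductSpace

/-!
Along a solution of `u̇ = -F'(u)* F(u)` one has `d/dt ‖F(u)‖² = -2 ‖F'(u)* F(u)‖²`. A right inverse
of `F'(u)` of norm at most `m₁` gives `‖F'(u)* y‖ ≥ ‖y‖ / m₁`, so `‖F(u)‖` decays like
`exp (-t / m₁²)`. Hence the speed `‖u̇‖ ≤ M₁ ‖F(u)‖` is integrable, and the trajectory has length
less than `M₁ m₁² ‖F(u₀)‖ ≤ R`. This a priori bound confines it to the ball in which the estimates
hold and makes it converge. For global existence, the vector field is composed with the radial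
retraction onto the ball, which makes it bounded and globally Lipschitz; the a priori bound shows
that the trajectory never sees the modification.
-/

open Set Metric
open ContinuousLinearMap (adjoint)
open scoped NNReal Topology

section Lipschitz

variable {X : Type*} [PseudoMetricSpace X] {s : Set X}

lemma isBounded_image_of_lipschitzOnWith {Y : Type*} [PseudoMetricSpace Y] {f : X → Y} {K : ℝ≥0}
    (hf : LipschitzOnWith K f s) (hs : Bornology.IsBounded s) : Bornology.IsBounded (f '' s) := by
  obtain ⟨C, hC⟩ := isBounded_iff.1 hs
  exact isBounded_image_iff.2 ⟨K * C, fun x hx y hy =>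
    (hf.dist_le_mul x hx y hy).trans (by gcongr; exact hC hx hy)⟩

lemma exists_nnnorm_le_of_lipschitzOnWith {E : Type*} [SeminormedAddCommGroup E] {f : X → E}
    {K : ℝ≥0} (hf : LipschitzOnWith K f s) (hs : Bornology.IsBounded s) :
    ∃ C : ℝ≥0, ∀ x ∈ s, ‖f x‖₊ ≤ C := by
  obtain ⟨C, -, hC⟩ := (isBounded_image_of_lipschitzOnWith hf hs).exists_pos_norm_le
  exact ⟨C.toNNReal, fun x hx => NNReal.le_toNNReal_of_coe_le (hC _ (mem_image_of_mem f hx))⟩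

lemma exists_lipschitzOnWith_clm_apply {𝕜 E G : Type*} [NontriviallyNormedField 𝕜]
    [SeminormedAddCommGroup E] [NormedSpace 𝕜 E] [SeminormedAddCommGroup G] [NormedSpace 𝕜 G]
    {A : X → E →L[𝕜] G} {f : X → E} {K L : ℝ≥0} (hA : LipschitzOnWith K A s)
    (hf : LipschitzOnWith L f s) (hs : Bornology.IsBounded s) :
    ∃ N, LipschitzOnWith N (fun x => A x (f x)) s := by
  obtain ⟨M, hM⟩ := exists_nnnorm_le_of_lipschitzOnWith hA hs
  obtain ⟨C, hC⟩ := exists_nnnorm_le_of_lipschitzOnWith hf hs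
  refine ⟨K * C + M * L, .of_dist_le_mul fun x hx y hy => ?_⟩
  have hsplit : A x (f x) - A y (f y) = (A x - A y) (f x) + A y (f x - f y) := by simp
  have hAxy : ‖A x - A y‖ ≤ K * dist x y := dist_eq_norm (A x) (A y) ▸ hA.dist_le_mul x hx y hy
  have hfxy : ‖f x - f y‖ ≤ L * dist x y := dist_eq_norm (f x) (f y) ▸ hf.dist_le_mul x hx y hy
  calc dist (A x (f x)) (A y (f y)) = ‖(A x - A y) (f x) + A y (f x - f y)‖ := by
        rw [dist_eq_norm, hsplit]
    _ ≤ ‖A x - A y‖ * ‖f x‖ + ‖A y‖ * ‖f x - f y‖ :=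
        norm_add_le_of_le ((A x - A y).le_opNorm _) ((A y).le_opNorm _)
    _ ≤ (K * dist x y) * C + M * (L * dist x y) := by
        gcongr
        exacts [hC x hx, hM y hy]
    _ = ↑(K * C + M * L) * dist x y := by push_cast; ring

end Lipschitz

section RadialRetraction

variable {E : Type*} [NormedAddCommGroup E] [NormedSpace ℝ E] {c x : E} {R : ℝ}

/-- The retraction of a normed space onto the closed ball of centre `c` and radius `R`, moving the
points outside the ball along rays to the bounding sphere. It extends a vector field given on the
ball to the whole space. The maximum makes a single formula serve inside and outside the ball. -/
noncomputable def radialRetraction (c : E) (R : ℝ) (x : E) : E :=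
  c + (R / max R ‖x - c‖) • (x - c)

lemma radialRetraction_of_mem_closedBall (hR : 0 < R) (hx : x ∈ closedBall c R) :
    radialRetraction c R x = x := by
  rw [radialRetraction, max_eq_left (mem_closedBall_iff_norm.1 hx), div_self hR.ne', one_smul,
    add_sub_cancel]

lemma radialRetraction_mem_closedBall (hR : 0 < R) (c x : E) :
    radialRetraction c R x ∈ closedBall c R := by
  have hmax : 0 < max R ‖x - c‖ := lt_max_of_lt_left hR
  rw [mem_closedBall_iff_norm, radialRetraction, add_sub_cancel_left, norm_smul,
    Real.norm_of_nonneg (by positivity), div_mul_eq_mul_div, div_le_iff₀ hmax]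
  exact mul_le_mul_of_nonneg_left (le_max_right _ _) hR.le

lemma abs_div_max_sub_div_max_mul_le {a b : ℝ} (hR : 0 < R) (hb : 0 ≤ b) :
    |R / max R a - R / max R b| * b ≤ |a - b| := by
  have ha' : 0 < max R a := lt_max_of_lt_left hR
  have hb' : 0 < max R b := lt_max_of_lt_left hR
  have hfactor : R / max R a - R / max R b =
      R / max R a * (b ⊔ R - a ⊔ R) * (max R b)⁻¹ := by
    rw [max_comm b, max_comm a]
    field_simp
  calc |R / max R a - R / max R b| * b
      = R / max R a * |b ⊔ R - a ⊔ R| * (b / max R b) := by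
        rw [hfactor, abs_mul, abs_mul, abs_of_pos (div_pos hR ha'), abs_of_pos (inv_pos.2 hb')]
        ring
    _ ≤ 1 * |b - a| * 1 := by
        gcongr ?_ * ?_ * ?_
        exacts [(div_le_one ha').2 (le_max_left _ _), abs_max_sub_max_le_abs b a R,
          (div_le_one hb').2 (le_max_right _ _)]
    _ = |a - b| := by rw [one_mul, mul_one, abs_sub_comm]

lemma lipschitzWith_radialRetraction (hR : 0 < R) (c : E) :
    LipschitzWith 2 (radialRetraction c R) := by
  refine .of_dist_le_mul fun x y => ?_
  have hmax : 0 < max R ‖x - c‖ := lt_max_of_lt_left hR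
  have hsplit : radialRetraction c R x - radialRetraction c R y =
      (R / max R ‖x - c‖) • (x - y) + (R / max R ‖x - c‖ - R / max R ‖y - c‖) • (y - c) := by
    unfold radialRetraction
    module
  have hscale : ‖(R / max R ‖x - c‖) • (x - y)‖ ≤ ‖x - y‖ := by
    rw [norm_smul, Real.norm_of_nonneg (by positivity)]
    exact mul_le_of_le_one_left (norm_nonneg _) ((div_le_one hmax).2 (le_max_left _ _))
  have hangle : ‖(R / max R ‖x - c‖ - R / max R ‖y - c‖) • (y - c)‖ ≤ ‖x - y‖ := by
    rw [norm_smul, Real.norm_eq_abs]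
    calc _ ≤ |‖x - c‖ - ‖y - c‖| := abs_div_max_sub_div_max_mul_le hR (norm_nonneg _)
      _ ≤ ‖x - y‖ := by simpa using abs_norm_sub_norm_le (x - c) (y - c)
  rw [dist_eq_norm, dist_eq_norm, hsplit]
  exact (norm_add_le_of_le hscale hangle).trans_eq (two_mul _).symm

end RadialRetraction

section GlobalExistence

variable {E : Type*} [NormedAddCommGroup E] [NormedSpace ℝ E] {x₀ : E} {K : ℝ≥0}

lemma exists_isIntegralCurve_of_forall_Ioo {v : ℝ → E → E} (hv : ∀ t, LipschitzWith K (v t))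
    (h : ∀ a > 0, ∃ γ : ℝ → E, γ 0 = x₀ ∧ IsIntegralCurveOn γ v (Ioo (-a) a)) :
    ∃ γ : ℝ → E, γ 0 = x₀ ∧ IsIntegralCurve γ v := by
  choose! γ hγ₀ hγ using h
  have hderiv : ∀ a > 0, ∀ t ∈ Ioo (-a) a, HasDerivAt (γ a) (v t (γ a t)) t := fun a ha t ht =>
    (hγ a ha t ht).hasDerivAt (Ioo_mem_nhds ht.1 ht.2)
  have hunique : ∀ a > 0, ∀ b ≥ a, EqOn (γ a) (γ b) (Ioo (-a) a) := fun a ha b hab =>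
    ODE_solution_unique_of_mem_Ioo (s := fun _ => univ) (t₀ := 0)
      (fun t _ => (hv t).lipschitzOnWith) ⟨neg_lt_zero.2 ha, ha⟩
      (fun t ht => ⟨hderiv a ha t ht, mem_univ _⟩)
      (fun t ht => ⟨hderiv b (ha.trans_le hab) t (Ioo_subset_Ioo (neg_le_neg hab) hab ht),
        mem_univ _⟩)
      ((hγ₀ a ha).trans (hγ₀ b (ha.trans_le hab)).symm)
  have hglue : ∀ a t, |t| < a → γ (|t| + 1) t = γ a t := by
    intro a t hta
    have ht : |t| < |t| + 1 := lt_add_one _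
    rcases le_total (|t| + 1) a with hle | hle
    · exact hunique _ (by positivity) _ hle (abs_lt.1 ht)
    · exact (hunique _ ((abs_nonneg t).trans_lt hta) _ hle (abs_lt.1 hta)).symm
  refine ⟨fun t => γ (|t| + 1) t, hγ₀ _ (by positivity), fun t => ?_⟩
  have ht : |t| < |t| + 1 := lt_add_one _
  refine (hderiv _ (by positivity) t (abs_lt.1 ht)).congr_of_eventuallyEq ?_
  filter_upwards [continuous_abs.continuousAt.eventually_lt continuousAt_const ht] with τ hτ
  exact hglue _ τ hτ

lemma exists_isIntegralCurve_of_lipschitzWith_of_nnnorm_le [CompleteSpace E] {v : E → E} {L : ℝ≥0}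
    (hv : LipschitzWith K v) (hL : ∀ x, ‖v x‖₊ ≤ L) (x₀ : E) :
    ∃ γ : ℝ → E, γ 0 = x₀ ∧ IsIntegralCurve γ (fun _ => v) := by
  refine exists_isIntegralCurve_of_forall_Ioo (fun _ => hv) fun a ha => ?_
  have hpl : IsPicardLindelof (fun _ => v) (tmin := -a) (tmax := a)
      ⟨0, neg_nonpos.2 ha.le, ha.le⟩ x₀ (L * a.toNNReal) 0 L K :=
    .of_time_independent (fun x _ => hL x) hv.lipschitzOnWith (by simp [ha.le])
  obtain ⟨γ, hγ₀, hγ⟩ := hpl.exists_eq_forall_mem_Icc_hasDerivWithinAt₀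
  exact ⟨γ, hγ₀, IsIntegralCurveOn.mono hγ Ioo_subset_Icc_self⟩

lemma exists_continuous_hasDerivAt_of_lipschitzOnWith_closedBall [CompleteSpace E] {v : E → E}
    {R : ℝ} (hR : 0 < R) (hv : LipschitzOnWith K v (closedBall x₀ R)) :
    ∃ u : ℝ → E, u 0 = x₀ ∧ Continuous u ∧
      ∀ t, u t ∈ closedBall x₀ R → HasDerivAt u (v (u t)) t := by
  obtain ⟨L, hL⟩ := exists_nnnorm_le_of_lipschitzOnWith hv isBounded_closedBall
  have hmem := radialRetraction_mem_closedBall hR x₀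
  have hlip : LipschitzWith (K * 2) (v ∘ radialRetraction x₀ R) := lipschitzOnWith_univ.1 <|
    hv.comp (lipschitzWith_radialRetraction hR x₀).lipschitzOnWith fun x _ => hmem x
  obtain ⟨u, hu₀, hu⟩ :=
    exists_isIntegralCurve_of_lipschitzWith_of_nnnorm_le hlip (fun x => hL _ (hmem x)) x₀
  refine ⟨u, hu₀, continuous_iff_continuousAt.2 fun t => (hu t).continuousAt, fun t ht => ?_⟩
  simpa only [Function.comp_apply, radialRetraction_of_mem_closedBall hR ht] using hu t

end GlobalExistence

section ExponentialDecay

lemma hasDerivAt_exp_neg_mul (c t : ℝ) :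
    HasDerivAt (fun τ => Real.exp (-(c * τ))) (-(c * Real.exp (-(c * t)))) t := by
  simpa [mul_comm] using ((hasDerivAt_id t).const_mul c).neg.exp

lemma norm_le_norm_mul_exp_of_inner_deriv_le {E : Type*} [NormedAddCommGroup E]
    [InnerProductSpace ℝ E] {g g' : ℝ → E} {a b c : ℝ}
    (hg : ∀ t ∈ Icc a b, HasDerivWithinAt g (g' t) (Icc a b) t)
    (hg' : ∀ t ∈ Ico a b, ⟪g t, g' t⟫ ≤ -(c * ‖g t‖ ^ 2)) :
    ∀ t ∈ Icc a b, ‖g t‖ ≤ ‖g a‖ * Real.exp (-(c * (t - a))) := by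
  intro t ht
  have hsq : ‖g t‖ ^ 2 ≤ gronwallBound (‖g a‖ ^ 2) (-(2 * c)) 0 (t - a) :=
    le_gronwallBound_of_liminf_deriv_right_le
      (fun τ hτ => (hg τ hτ).norm_sq.continuousWithinAt)
      (fun τ hτ _ hr => ((hg τ (Ico_subset_Icc_self hτ)).norm_sq.mono_of_mem_nhdsWithin
        (Icc_mem_nhdsGE_of_mem hτ)).liminf_right_slope_le hr)
      le_rfl (fun τ hτ => by linarith [hg' τ hτ]) t ht
  rw [gronwallBound_ε0] at hsq
  refine (pow_le_pow_iff_left₀ (norm_nonneg _) (by positivity) two_ne_zero).1 (hsq.trans_eq ?_)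
  rw [mul_pow, ← Real.exp_nat_mul]
  push_cast
  ring_nf

lemma norm_sub_le_of_norm_deriv_le_exp {E : Type*} [NormedAddCommGroup E] [NormedSpace ℝ E]
    {u u' : ℝ → E} {a b c C : ℝ} (hc : c ≠ 0) (hab : a ≤ b)
    (hu : ∀ t ∈ Icc a b, HasDerivWithinAt u (u' t) (Icc a b) t)
    (hu' : ∀ t ∈ Ico a b, ‖u' t‖ ≤ C * Real.exp (-(c * t))) :
    ‖u b - u a‖ ≤ C / c * (Real.exp (-(c * a)) - Real.exp (-(c * b))) := by
  have hbound : ∀ t, HasDerivAt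
      (fun τ => C / c * (Real.exp (-(c * a)) - Real.exp (-(c * τ)))) (C * Real.exp (-(c * t))) t :=
    fun t => (((hasDerivAt_exp_neg_mul c t).const_sub _).const_mul (C / c)).congr_deriv (by
      rw [neg_neg, ← mul_assoc, div_mul_cancel₀ _ hc])
  exact image_norm_le_of_norm_deriv_right_le_deriv_boundary (f := fun t => u t - u a)
    (fun t ht => ((hu t ht).sub_const _).continuousWithinAt)
    (fun t ht => ((hu t (Ico_subset_Icc_self ht)).sub_const _).mono_of_mem_nhdsWithin
      (Icc_mem_nhdsGE_of_mem ht))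
    (by simp) hbound hu' (right_mem_Icc.2 hab)

lemma tendsto_mul_exp_neg_div_atTop (C : ℝ) {τ : ℝ} (hτ : 0 < τ) :
    Tendsto (fun t => C * Real.exp (-(t / τ))) atTop (𝓝 0) := by
  simpa using ((Real.tendsto_exp_neg_atTop_nhds_zero.comp
    (tendsto_id.atTop_div_const hτ)).const_mul C)

lemma exists_tendsto_forall_dist_le {α X : Type*} [SemilatticeSup α] [PseudoMetricSpace X]
    [CompleteSpace X] {u : α → X} {β : α → ℝ} {a : α}
    (hu : ∀ r s, a ≤ r → r ≤ s → dist (u s) (u r) ≤ β r) (hβ : Tendsto β atTop (𝓝 0)) :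
    ∃ y, Tendsto u atTop (𝓝 y) ∧ ∀ t ≥ a, dist (u t) y ≤ β t := by
  have : Nonempty α := ⟨a⟩
  have hcauchy : CauchySeq fun t : Ici a => u t :=
    cauchySeq_of_le_tendsto_0' (fun t : Ici a => β t)
      (fun r s hrs => dist_comm (u s) (u r) ▸ hu r s r.2 hrs) (tendsto_comp_val_Ici_atTop.2 hβ)
  obtain ⟨y, hy⟩ := cauchySeq_tendsto_of_complete hcauchy
  have hy := tendsto_comp_val_Ici_atTop.1 hy
  refine ⟨y, hy, fun t ht => le_of_tendsto (tendsto_const_nhds.dist hy) ?_⟩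
  filter_upwards [eventually_ge_atTop t] with s hs
  exact dist_comm (u s) (u t) ▸ hu t s ht hs

end ExponentialDecay

section GradientFlow

variable {H K : Type*} [NormedAddCommGroup H] [InnerProductSpace ℝ H] [CompleteSpace H]
  [NormedAddCommGroup K] [InnerProductSpace ℝ K] [CompleteSpace K]
  {F : H → K} {F' : H → H →L[ℝ] K} {s : Set H} {u : ℝ → H} {M m T : ℝ}

/-- The negative gradient of `x ↦ ‖F x‖² / 2`, whose integral curves are the trajectories of the
continuous gradient method. The derivative `F'` of `F` is passed separately because `F` need only be
differentiable on a subset. -/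
noncomputable def gradientField (F : H → K) (F' : H → H →L[ℝ] K) (x : H) : H :=
  -adjoint (F' x) (F x)

lemma exists_lipschitzOnWith_gradientField {L : ℝ≥0} (hs : Convex ℝ s)
    (hs' : Bornology.IsBounded s) (hF : ∀ x ∈ s, HasFDerivWithinAt F (F' x) s x)
    (hF' : LipschitzOnWith L F' s) : ∃ N, LipschitzOnWith N (gradientField F F') s := by
  obtain ⟨C, hC⟩ := exists_nnnorm_le_of_lipschitzOnWith hF' hs'
  have hadj : LipschitzOnWith (1 * L) (fun x => adjoint (F' x)) s :=
    (adjoint (𝕜 := ℝ) (E := H) (F := K)).lipschitz.comp_lipschitzOnWith hF'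
  obtain ⟨N, hN⟩ := exists_lipschitzOnWith_clm_apply hadj
    (hs.lipschitzOnWith_of_nnnorm_hasFDerivWithin_le hF hC) hs'
  exact ⟨N, hN.neg⟩

lemma norm_le_mul_norm_adjoint_of_comp_eq_id {A : H →L[ℝ] K} {G : K →L[ℝ] H}
    (hAG : A ∘L G = .id ℝ K) (hG : ‖G‖ ≤ m) (y : K) : ‖y‖ ≤ m * ‖adjoint A y‖ := by
  have hGA : adjoint G ∘L adjoint A = .id ℝ K := by
    rw [← ContinuousLinearMap.adjoint_comp, hAG, ContinuousLinearMap.adjoint_id]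
  calc ‖y‖ = ‖adjoint G (adjoint A y)‖ := by rw [← ContinuousLinearMap.comp_apply, hGA]; rfl
    _ ≤ m * ‖adjoint A y‖ :=
      (adjoint G).le_of_opNorm_le ((adjoint.norm_map G).trans_le hG) _

lemma norm_comp_le_of_isIntegralCurveOn_gradientField
    (hF : ∀ x ∈ s, HasFDerivWithinAt F (F' x) s x)
    (hm : ∀ x ∈ s, ∀ y, ‖y‖ ≤ m * ‖adjoint (F' x) y‖) (hus : ∀ t ∈ Icc 0 T, u t ∈ s)
    (hu : IsIntegralCurveOn u (fun _ => gradientField F F') (Icc 0 T)) :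
    ∀ t ∈ Icc 0 T, ‖F (u t)‖ ≤ ‖F (u 0)‖ * Real.exp (-(t / m ^ 2)) := by
  have hderiv : ∀ t ∈ Icc 0 T,
      HasDerivWithinAt (F ∘ u) (F' (u t) (gradientField F F' (u t))) (Icc 0 T) t := fun t ht =>
    (hF _ (hus t ht)).comp_hasDerivWithinAt t (hu t ht) hus
  have hdissip : ∀ t ∈ Ico 0 T,
      ⟪F (u t), F' (u t) (gradientField F F' (u t))⟫ ≤ -((m ^ 2)⁻¹ * ‖F (u t)‖ ^ 2) := by
    intro t ht
    rw [← ContinuousLinearMap.adjoint_inner_left, gradientField, inner_neg_right,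
      real_inner_self_eq_norm_sq, neg_le_neg_iff]
    refine inv_mul_le_of_le_mul₀ (sq_nonneg _) (sq_nonneg _) ?_
    rw [← mul_pow]
    exact pow_le_pow_left₀ (norm_nonneg _) (hm _ (hus t (Ico_subset_Icc_self ht)) _) 2
  simpa only [sub_zero, inv_mul_eq_div] using! norm_le_norm_mul_exp_of_inner_deriv_le hderiv hdissip

lemma norm_sub_le_of_isIntegralCurveOn_gradientField (hm₀ : m ≠ 0)
    (hF : ∀ x ∈ s, HasFDerivWithinAt F (F' x) s x) (hM : ∀ x ∈ s, ‖F' x‖ ≤ M)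
    (hm : ∀ x ∈ s, ∀ y, ‖y‖ ≤ m * ‖adjoint (F' x) y‖) (hus : ∀ t ∈ Icc 0 T, u t ∈ s)
    (hu : IsIntegralCurveOn u (fun _ => gradientField F F') (Icc 0 T))
    {a b : ℝ} (ha : 0 ≤ a) (hab : a ≤ b) (hb : b ≤ T) :
    ‖u b - u a‖ ≤
      M * m ^ 2 * ‖F (u 0)‖ * (Real.exp (-(a / m ^ 2)) - Real.exp (-(b / m ^ 2))) := by
  have hsub : Icc a b ⊆ Icc 0 T := Icc_subset_Icc ha hb
  have hspeed : ∀ t ∈ Ico a b,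
      ‖gradientField F F' (u t)‖ ≤ M * ‖F (u 0)‖ * Real.exp (-((m ^ 2)⁻¹ * t)) := by
    intro t ht
    have ht := hsub (Ico_subset_Icc_self ht)
    have hF' : ‖adjoint (F' (u t))‖ ≤ M := (adjoint.norm_map _).trans_le (hM _ (hus t ht))
    calc ‖gradientField F F' (u t)‖ ≤ M * ‖F (u t)‖ :=
          (norm_neg _).trans_le ((adjoint (F' (u t))).le_of_opNorm_le hF' _)
      _ ≤ M * (‖F (u 0)‖ * Real.exp (-(t / m ^ 2))) := by
          gcongr
          exacts [(norm_nonneg _).trans hF',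
            norm_comp_le_of_isIntegralCurveOn_gradientField hF hm hus hu t ht]
      _ = M * ‖F (u 0)‖ * Real.exp (-((m ^ 2)⁻¹ * t)) := by rw [inv_mul_eq_div, mul_assoc]
  have hdisp := norm_sub_le_of_norm_deriv_le_exp (inv_ne_zero (pow_ne_zero 2 hm₀)) hab
    (hu.mono hsub) hspeed
  simpa only [inv_mul_eq_div, div_inv_eq_mul, mul_right_comm] using hdisp

lemma mem_closedBall_of_hasDerivAt_gradientField {R : ℝ} (hR : 0 < R) (hm₀ : m ≠ 0)
    (hF : ∀ x ∈ closedBall (u 0) R, HasFDerivWithinAt F (F' x) (closedBall (u 0) R) x)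
    (hM : ∀ x ∈ closedBall (u 0) R, ‖F' x‖ ≤ M)
    (hm : ∀ x ∈ closedBall (u 0) R, ∀ y, ‖y‖ ≤ m * ‖adjoint (F' x) y‖)
    (hsmall : M * m ^ 2 * ‖F (u 0)‖ ≤ R) (hcont : Continuous u)
    (hu : ∀ t, u t ∈ closedBall (u 0) R → HasDerivAt u (gradientField F F' (u t)) t) :
    ∀ t ≥ 0, u t ∈ closedBall (u 0) R := by
  have hball : ∀ t ≥ 0, (∀ τ ∈ Icc 0 t, u τ ∈ closedBall (u 0) R) → u t ∈ ball (u 0) R := by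
    intro t ht hus
    have hdisp := norm_sub_le_of_isIntegralCurveOn_gradientField hm₀ hF hM hm hus
      (fun τ hτ => (hu τ (hus τ hτ)).hasDerivWithinAt) le_rfl ht le_rfl
    rw [zero_div, neg_zero, Real.exp_zero] at hdisp
    have hexp : Real.exp (-(t / m ^ 2)) ≤ 1 := Real.exp_le_one_iff.2 (neg_nonpos.2 (by positivity))
    rw [mem_ball_iff_norm]
    calc ‖u t - u 0‖ ≤ R * (1 - Real.exp (-(t / m ^ 2))) :=
          hdisp.trans (mul_le_mul_of_nonneg_right hsmall (sub_nonneg.2 hexp))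
      _ < R := mul_lt_of_lt_one_right hR (sub_lt_self _ (Real.exp_pos _))
  intro t ht
  have hclosed : IsClosed (u ⁻¹' closedBall (u 0) R ∩ Icc 0 t) :=
    (isClosed_closedBall.preimage hcont).inter isClosed_Icc
  refine hclosed.Icc_subset_of_forall_mem_nhdsGT_of_Icc_subset (mem_closedBall_self hR.le)
    (fun τ hτ hsub => ?_) (right_mem_Icc.2 ht)
  exact mem_nhdsWithin_of_mem_nhds (hcont.continuousAt
    (closedBall_mem_nhds_of_mem (hball τ hτ.1 hsub)))

lemma exists_gradientField_trajectory_mem_closedBall {x₀ : H} {R : ℝ} {L : ℝ≥0} (hR : 0 < R)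
    (hm₀ : m ≠ 0) (hF : ∀ x ∈ closedBall x₀ R, HasFDerivWithinAt F (F' x) (closedBall x₀ R) x)
    (hL : LipschitzOnWith L F' (closedBall x₀ R)) (hM : ∀ x ∈ closedBall x₀ R, ‖F' x‖ ≤ M)
    (hm : ∀ x ∈ closedBall x₀ R, ∀ y, ‖y‖ ≤ m * ‖adjoint (F' x) y‖)
    (hsmall : M * m ^ 2 * ‖F x₀‖ ≤ R) :
    ∃ u : ℝ → H, u 0 = x₀ ∧
      ∀ t ≥ 0, u t ∈ closedBall x₀ R ∧ HasDerivAt u (gradientField F F' (u t)) t := by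
  obtain ⟨N, hN⟩ := exists_lipschitzOnWith_gradientField (convex_closedBall x₀ R)
    isBounded_closedBall hF hL
  obtain ⟨u, rfl, hcont, hderiv⟩ :=
    exists_continuous_hasDerivAt_of_lipschitzOnWith_closedBall hR hN
  have hmem := mem_closedBall_of_hasDerivAt_gradientField hR hm₀ hF hM hm hsmall hcont hderiv
  exact ⟨u, rfl, fun t ht => ⟨hmem t ht, hderiv t (hmem t ht)⟩⟩

lemma exists_tendsto_zero_of_isIntegralCurveOn_gradientField (hs : IsClosed s) (hm₀ : m ≠ 0)
    (hF : ∀ x ∈ s, HasFDerivWithinAt F (F' x) s x) (hM : ∀ x ∈ s, ‖F' x‖ ≤ M)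
    (hm : ∀ x ∈ s, ∀ y, ‖y‖ ≤ m * ‖adjoint (F' x) y‖) (hus : ∀ t ≥ 0, u t ∈ s)
    (hu : ∀ T, IsIntegralCurveOn u (fun _ => gradientField F F') (Icc 0 T)) :
    ∃ y, Tendsto u atTop (𝓝 y) ∧ F y = 0 ∧
      (∀ t ≥ 0, ‖F (u t)‖ ≤ ‖F (u 0)‖ * Real.exp (-(t / m ^ 2))) ∧
      ∀ t ≥ 0, ‖u t - y‖ ≤ M * m ^ 2 * ‖F (u 0)‖ * Real.exp (-(t / m ^ 2)) := by
  have hdecay : ∀ t ≥ 0, ‖F (u t)‖ ≤ ‖F (u 0)‖ * Real.exp (-(t / m ^ 2)) := fun t ht =>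
    norm_comp_le_of_isIntegralCurveOn_gradientField hF hm (fun τ hτ => hus τ hτ.1) (hu t)
      t (right_mem_Icc.2 ht)
  have hdist : ∀ r t, 0 ≤ r → r ≤ t →
      dist (u t) (u r) ≤ M * m ^ 2 * ‖F (u 0)‖ * Real.exp (-(r / m ^ 2)) := by
    intro r t hr hrt
    have hM₀ : 0 ≤ M := (norm_nonneg _).trans (hM _ (hus 0 le_rfl))
    rw [dist_eq_norm]
    refine (norm_sub_le_of_isIntegralCurveOn_gradientField hm₀ hF hM hm
      (fun τ hτ => hus τ hτ.1) (hu t) hr hrt le_rfl).trans ?_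
    gcongr
    exact sub_le_self _ (Real.exp_pos _).le
  have hm_sq : 0 < m ^ 2 := by positivity
  obtain ⟨y, hy, hyd⟩ := exists_tendsto_forall_dist_le hdist (tendsto_mul_exp_neg_div_atTop _ hm_sq)
  have hge := eventually_ge_atTop (0 : ℝ)
  have hys : y ∈ s := hs.mem_of_tendsto hy (hge.mono hus)
  have hFy : Tendsto (F ∘ u) atTop (𝓝 (F y)) := (hF y hys).continuousWithinAt.tendsto.comp
    (tendsto_nhdsWithin_iff.2 ⟨hy, hge.mono hus⟩)
  have hFu : Tendsto (F ∘ u) atTop (𝓝 0) :=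
    squeeze_zero_norm' (hge.mono hdecay) (tendsto_mul_exp_neg_div_atTop _ hm_sq)
  exact ⟨y, hy, tendsto_nhds_unique hFy hFu, hdecay, by simpa only [dist_eq_norm] using hyd⟩

end GradientFlow

theorem continuous_gradient_method_general
    {H K : Type*} [NormedAddCommGroup H] [InnerProductSpace ℝ H] [CompleteSpace H]
    [NormedAddCommGroup K] [InnerProductSpace ℝ K] [CompleteSpace K]
    {F : H → K} {F' : H → H →L[ℝ] K} {G : H → K →L[ℝ] H} {u₀ : H} {R M₁ m₁ : ℝ} {L : ℝ≥0}
    (hR : 0 < R)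
    (hF : ∀ x ∈ closedBall u₀ R, HasFDerivWithinAt F (F' x) (closedBall u₀ R) x)
    (hL : LipschitzOnWith L F' (closedBall u₀ R))
    (hM₁ : ∀ x ∈ closedBall u₀ R, ‖F' x‖ ≤ M₁)
    (hG : ∀ x ∈ closedBall u₀ R, F' x ∘L G x = .id ℝ K)
    (hm₁ : ∀ x ∈ closedBall u₀ R, ‖G x‖ ≤ m₁)
    (hsmall : M₁ * m₁ ^ 2 * ‖F u₀‖ ≤ R) :
    ∃ u : ℝ → H, u 0 = u₀ ∧
      (∀ t ≥ 0, HasDerivAt u (-adjoint (F' (u t)) (F (u t))) t) ∧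
      (∀ t ≥ 0, u t ∈ closedBall u₀ R) ∧
      ∃ y : H, Tendsto u atTop (𝓝 y) ∧ F y = 0 ∧
        (∀ t ≥ 0, ‖F (u t)‖ ≤ ‖F u₀‖ * Real.exp (-(t / m₁ ^ 2))) ∧
        (∀ t ≥ 0, ‖u t - y‖ ≤ M₁ * m₁ ^ 2 * ‖F u₀‖ * Real.exp (-(t / m₁ ^ 2))) := by
  have hu₀ : u₀ ∈ closedBall u₀ R := mem_closedBall_self hR.le
  have hcoer := fun x hx => norm_le_mul_norm_adjoint_of_comp_eq_id (hG x hx) (hm₁ x hx)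
  by_cases hF₀ : F u₀ = 0
  · exact ⟨fun _ => u₀, rfl, fun t _ => by simpa [hF₀] using hasDerivAt_const t u₀,
      fun _ _ => hu₀, u₀, tendsto_const_nhds, hF₀, by simp [hF₀], by simp [hF₀]⟩
  have hm₀ : m₁ ≠ 0 := by
    rintro rfl
    exact hF₀ (norm_le_zero_iff.1 (by simpa using hcoer u₀ hu₀ (F u₀)))
  obtain ⟨u, rfl, hu⟩ :=
    exists_gradientField_trajectory_mem_closedBall hR hm₀ hF hL hM₁ hcoer hsmall
  exact ⟨u, rfl, fun t ht => (hu t ht).2, fun t ht => (hu t ht).1,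
    exists_tendsto_zero_of_isIntegralCurveOn_gradientField isClosed_closedBall hm₀ hF hM₁ hcoer
      (fun t ht => (hu t ht).1) (fun _ t ht => (hu t ht.1).2.hasDerivWithinAt)⟩

/-- **Example 3: continuous gradient method.** If `‖F′(u)‖ ≤ M₁`,
`‖[F′(u)]⁻¹‖ ≤ m₁`, `‖F″(u)‖ ≤ M₂` on `B`, and `M₁m₁²‖F(u₀)‖ ≤ R`, then
`u̇ = −[F′(u)]*F(u)`, `u(0) = u₀` has a global solution in `B` converging to a
zero `y` of `F`, with `‖F(u(t))‖ ≤ ‖F(u₀)‖e^{−t/m₁²}` and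
`‖u(t) − y‖ ≤ M₁m₁²‖F(u₀)‖e^{−t/m₁²}`. -/
theorem continuous_gradient_method
    {H : Type*} [NormedAddCommGroup H] [InnerProductSpace ℝ H] [CompleteSpace H]
    (F : H → H) (F' : H → H →L[ℝ] H) (F'' : H → H →L[ℝ] H →L[ℝ] H)
    (hF' : ∀ u : H, HasFDerivAt F (F' u) u)
    (hF'' : ∀ u : H, HasFDerivAt F' (F'' u) u)
    (u₀ : H) (R M₁ M₂ m₁ : ℝ) (hR : 0 < R)
    (B : Set H) (hB : B = {u : H | ‖u - u₀‖ ≤ R})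
    (hM₂ : ∀ u ∈ B, ‖F'' u‖ ≤ M₂)
    (hM₁ : ∀ u ∈ B, ‖F' u‖ ≤ M₁)
    (Finv : H → H →L[ℝ] H)
    (hinv₁ : ∀ u ∈ B, (F' u).comp (Finv u) = ContinuousLinearMap.id ℝ H)
    (hinv₂ : ∀ u ∈ B, (Finv u).comp (F' u) = ContinuousLinearMap.id ℝ H)
    (hm₁ : ∀ u ∈ B, ‖Finv u‖ ≤ m₁)
    (hsmall : M₁ * m₁ ^ 2 * ‖F u₀‖ ≤ R) :
    ∃ u : ℝ → H, u 0 = u₀ ∧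
      (∀ t ≥ (0:ℝ), HasDerivAt u (-(ContinuousLinearMap.adjoint (F' (u t)) (F (u t)))) t) ∧
      (∀ t ≥ (0:ℝ), u t ∈ B) ∧
      ∃ y : H, Tendsto u atTop (nhds y) ∧ F y = 0 ∧
        (∀ t ≥ (0:ℝ), ‖F (u t)‖ ≤ ‖F u₀‖ * Real.exp (-(t / m₁ ^ 2))) ∧
        (∀ t ≥ (0:ℝ), ‖u t - y‖ ≤ M₁ * m₁ ^ 2 * ‖F u₀‖ * Real.exp (-(t / m₁ ^ 2))) := by
  obtain rfl : B = closedBall u₀ R := hB.trans (by ext; simp [dist_eq_norm])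
  have hL : LipschitzOnWith M₂.toNNReal F' (closedBall u₀ R) :=
    (convex_closedBall u₀ R).lipschitzOnWith_of_nnnorm_hasFDerivWithin_le
      (fun x _ => (hF'' x).hasFDerivWithinAt)
      (fun x hx => NNReal.le_toNNReal_of_coe_le (hM₂ x hx))
  exact continuous_gradient_method_general hR (fun x _ => (hF' x).hasFDerivWithinAt) hL hM₁ hinv₁
    hm₁ hsmall
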